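/- Let N ≥ 1, let Ω ⊆ ℝ^N be a bounded open set, let b > 0, α > 0, λ > 0 be real numbers, and let f, v : ℝ^N → ℝ with v twice continuously differentiable on Ω and the function x ↦ ‖∇v(x)‖² integrable on Ω. Assume v satisfies −Δv(x) = f(x) for all x ∈ Ω, v(x) ≥ 0 for all x ∈ Ω, and v(x) = 0 for all x in the boundary of Ω. Then there exists a real number t > 0 such that the function u = t·v satisfies −(1 + b·(∫_Ω ‖∇u(x)‖² dx)^α)·Δu(x) = λ·f(x) for all x ∈ Ω, u(x) ≥ 0 for all x ∈ Ω, and u(x) = 0 for all x in the boundary of Ω. -/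

import Mathlib

open MeasureTheory

/-- The Laplacian of `u : ℝ^N → ℝ` at `x`: the trace of the second derivative, i.e. the sum
of the pure second partial derivatives along the standard basis directions. -/
noncomputable def laplacian {N : ℕ} (u : EuclideanSpace ℝ (Fin N) → ℝ)
    (x : EuclideanSpace ℝ (Fin N)) : ℝ :=
  ∑ i : Fin N, fderiv ℝ (fun y => fderiv ℝ u y (EuclideanSpace.single i 1)) x
    (EuclideanSpace.single i 1)

/-!
The nonlocal coefficient sees `u` only through the number `∫ ‖∇u‖²`, so along the ray `u = t • v`
it is the constant `M (t² A)` with `A = ∫ ‖∇v‖²`. Since `-Δv = f`, the equation for `u` reduces to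
the scalar equation `t * M (t² A) = λ`, which the intermediate value theorem solves as soon as `M`
is continuous and bounded below by a positive constant.
-/

section Gradient

variable {𝕜 F : Type*} [RCLike 𝕜] [NormedAddCommGroup F] [InnerProductSpace 𝕜 F] [CompleteSpace F]

theorem gradient_fun_const_mul (c : 𝕜) (u : F → 𝕜) (x : F) :
    gradient (fun y => c * u y) x = starRingEnd 𝕜 c • gradient u x := by
  have hfderiv : fderiv 𝕜 (fun y => c * u y) = c • fderiv 𝕜 u := fderiv_const_smul_field c
  simp only [gradient, hfderiv, Pi.smul_apply, map_smulₛₗ]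

theorem integral_norm_gradient_fun_const_mul_sq [MeasurableSpace F] (μ : Measure F) (c : 𝕜)
    (u : F → 𝕜) :
    ∫ x, ‖gradient (fun y => c * u y) x‖ ^ 2 ∂μ = ‖c‖ ^ 2 * ∫ x, ‖gradient u x‖ ^ 2 ∂μ := by
  simp only [gradient_fun_const_mul, norm_smul, RCLike.norm_conj, mul_pow, integral_const_mul]

end Gradient

theorem laplacian_fun_const_mul {N : ℕ} (c : ℝ) (u : EuclideanSpace ℝ (Fin N) → ℝ)
    (x : EuclideanSpace ℝ (Fin N)) :
    laplacian (fun y => c * u y) x = c * laplacian u x := by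
  have hfderiv (w : EuclideanSpace ℝ (Fin N) → ℝ) :
      fderiv ℝ (fun y => c * w y) = c • fderiv ℝ w := fderiv_const_smul_field c
  simp only [laplacian, hfderiv, Pi.smul_apply, smul_apply, smul_eq_mul, Finset.mul_sum]

theorem exists_pos_mul_eq_of_continuousOn_of_le {g : ℝ → ℝ} {m y : ℝ}
    (hg : ContinuousOn g (Set.Ici 0)) (hm : 0 < m) (hmg : ∀ t, 0 ≤ t → m ≤ g t) (hy : 0 < y) :
    ∃ t, 0 < t ∧ t * g t = y := by
  have hym : 0 ≤ y / m := by positivity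
  have hcont : ContinuousOn (fun t => t * g t) (Set.Icc 0 (y / m)) :=
    continuousOn_id.mul (hg.mono Set.Icc_subset_Ici_self)
  have hy_le : y ≤ y / m * g (y / m) :=
    calc y = y / m * m := (div_mul_cancel₀ y hm.ne').symm
      _ ≤ y / m * g (y / m) := by gcongr; exact hmg _ hym
  obtain ⟨t, ht, hty⟩ := intermediate_value_Ioc hym hcont ⟨by simpa using hy, hy_le⟩
  exact ⟨t, ht.1, hty⟩

theorem stmt_2_general {N : ℕ} {Ω : Set (EuclideanSpace ℝ (Fin N))}
    {μ : Measure (EuclideanSpace ℝ (Fin N))} {M : ℝ → ℝ} {m lam : ℝ}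
    (hM : ContinuousOn M (Set.Ici 0)) (hm : 0 < m) (hmM : ∀ s, 0 ≤ s → m ≤ M s) (hlam : 0 < lam)
    {f v : EuclideanSpace ℝ (Fin N) → ℝ}
    (_hv : ∀ x ∈ Ω, ContDiffAt ℝ 2 v x)
    (_hgrad : IntegrableOn (fun x => ‖gradient v x‖ ^ 2) Ω μ)
    (heq : ∀ x ∈ Ω, -laplacian v x = f x)
    (hnonneg : ∀ x ∈ Ω, 0 ≤ v x)
    (hbdry : ∀ x ∈ frontier Ω, v x = 0) :
    ∃ t : ℝ, 0 < t ∧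
      ((∀ x ∈ Ω,
        -(M (∫ x in Ω, ‖gradient (fun y => t * v y) x‖ ^ 2 ∂μ) *
            laplacian (fun y => t * v y) x) = lam * f x) ∧
      (∀ x ∈ Ω, 0 ≤ t * v x) ∧
      (∀ x ∈ frontier Ω, t * v x = 0)) := by
  let A := ∫ x in Ω, ‖gradient v x‖ ^ 2 ∂μ
  have hA : 0 ≤ A := integral_nonneg fun x => sq_nonneg _
  have henergy_nonneg (t : ℝ) : 0 ≤ ‖t‖ ^ 2 * A := mul_nonneg (sq_nonneg _) hA
  have hcoeff : ContinuousOn (fun t : ℝ => M (‖t‖ ^ 2 * A)) (Set.Ici 0) :=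
    hM.comp (by fun_prop) fun t _ => henergy_nonneg t
  obtain ⟨t, ht, htlam⟩ := exists_pos_mul_eq_of_continuousOn_of_le hcoeff hm
    (fun t _ => hmM _ (henergy_nonneg t)) hlam
  refine ⟨t, ht, fun x hx => ?_, fun x hx => mul_nonneg ht.le (hnonneg x hx),
    fun x hx => by rw [hbdry x hx, mul_zero]⟩
  rw [integral_norm_gradient_fun_const_mul_sq, laplacian_fun_const_mul]
  calc -(M (‖t‖ ^ 2 * A) * (t * laplacian v x))
      = t * M (‖t‖ ^ 2 * A) * -laplacian v x := by ring
    _ = lam * f x := by rw [htlam, heq x hx]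

/-- Sufficiency direction of Lemma 2.3: if `v` solves `−Δv = f`, `v ≥ 0` in `Ω`, `v = 0` on
`∂Ω`, then there is `t > 0` such that `u = t·v` solves the Kirchhoff-linear problem
`−(1 + b‖∇u‖₂^{2α})Δu = λf`, `u ≥ 0` in `Ω`, `u = 0` on `∂Ω`. -/
theorem stmt_2 {N : ℕ} (hN : 1 ≤ N) (Ω : Set (EuclideanSpace ℝ (Fin N)))
    (hΩopen : IsOpen Ω) (hΩbdd : Bornology.IsBounded Ω)
    (b α lam : ℝ) (hb : 0 < b) (hα : 0 < α) (hlam : 0 < lam)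
    (f v : EuclideanSpace ℝ (Fin N) → ℝ)
    (hv : ContDiffOn ℝ 2 v Ω)
    (hgrad : IntegrableOn (fun x => ‖gradient v x‖ ^ 2) Ω volume)
    (heq : ∀ x ∈ Ω, -laplacian v x = f x)
    (hnonneg : ∀ x ∈ Ω, 0 ≤ v x)
    (hbdry : ∀ x ∈ frontier Ω, v x = 0) :
    ∃ t : ℝ, 0 < t ∧
      ((∀ x ∈ Ω,
        -((1 + b * (∫ x in Ω, ‖gradient (fun y => t * v y) x‖ ^ 2) ^ α) *
            laplacian (fun y => t * v y) x) = lam * f x) ∧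
      (∀ x ∈ Ω, 0 ≤ t * v x) ∧
      (∀ x ∈ frontier Ω, t * v x = 0)) := by
  have hM : Continuous fun s : ℝ => 1 + b * s ^ α :=
    continuous_const.add (continuous_const.mul (Real.continuous_rpow_const hα.le))
  have hM_ge (s : ℝ) (hs : 0 ≤ s) : 1 ≤ 1 + b * s ^ α :=
    le_add_of_nonneg_right (by positivity)
  exact stmt_2_general hM.continuousOn one_pos hM_ge hlam
    (fun x hx => hv.contDiffAt (hΩopen.mem_nhds hx)) hgrad heq hnonneg hbdry
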